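/- arXiv:1404.5999 — 3 statements merged into one kernel-verified Lean document; each statement's English description precedes it below -/
import Mathlib

section
/- Let n ≥ 1, let x ∈ (0,1), let a > 1, and let ρ₁, ρ₂ be density matrices (n×n complex positive semidefinite matrices of trace 1) such that ρ_Av := x·ρ₁ + (1−x)·ρ₂ is positive definite. Then h(x) ≥ x·H̃_a(ρ₁, ρ_Av) + (1−x)·H̃_a(ρ₂, ρ_Av) ≥ S(ρ_Av) − x·S(ρ₁) − (1−x)·S(ρ₂), where h(x) = −x·log x − (1−x)·log(1−x) is the binary entropy. -/
open Matrix ComplexOrder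

/-- Apply a real function to a Hermitian matrix via the spectral decomposition
`A = U D U*`: the result is `U (f(D)) U*` where `f` acts on the diagonal. -/
noncomputable def mfun {m : Type*} [Fintype m] [DecidableEq m]
    (f : ℝ → ℝ) (A : Matrix m m ℂ) : Matrix m m ℂ :=
  if hA : A.IsHermitian then hA.cfc f else 0

/-- Matrix logarithm via spectral decomposition, with the convention `log 0 = 0`
(note `Real.log 0 = 0`). -/
noncomputable def matLog {m : Type*} [Fintype m] [DecidableEq m]
    (A : Matrix m m ℂ) : Matrix m m ℂ :=
  mfun Real.log A

/-- The positive semidefinite square root of a positive semidefinite matrix,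
via spectral decomposition. -/
noncomputable def matSqrt {m : Type*} [Fintype m] [DecidableEq m]
    (A : Matrix m m ℂ) : Matrix m m ℂ :=
  mfun Real.sqrt A

/-- Real power of a (positive semidefinite / positive definite) matrix via spectral
decomposition. -/
noncomputable def matRpow {m : Type*} [Fintype m] [DecidableEq m]
    (t : ℝ) (A : Matrix m m ℂ) : Matrix m m ℂ :=
  mfun (fun u => u ^ t) A

/-- The von Neumann entropy `S(ρ) = -Tr(ρ log ρ)`. -/
noncomputable def vnEntropy {m : Type*} [Fintype m] [DecidableEq m]
    (ρ : Matrix m m ℂ) : ℝ :=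
  -(Matrix.trace (ρ * matLog ρ)).re

/-- The quantum relative entropy `H(ρ, γ) = Tr(ρ (log ρ - log γ))`. -/
noncomputable def relEntropy {m : Type*} [Fintype m] [DecidableEq m]
    (ρ γ : Matrix m m ℂ) : ℝ :=
  (Matrix.trace (ρ * (matLog ρ - matLog γ))).re

/-- The trace norm of a Hermitian matrix: the sum of the absolute values of its
eigenvalues. -/
noncomputable def traceNorm {m : Type*} [Fintype m] [DecidableEq m]
    (A : Matrix m m ℂ) : ℝ :=
  if hA : A.IsHermitian then ∑ i, |hA.eigenvalues i| else 0

/-- A density matrix: positive semidefinite with trace 1. -/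
def IsDensity {m : Type*} [Fintype m] [DecidableEq m] (ρ : Matrix m m ℂ) : Prop :=
  ρ.PosSemidef ∧ Matrix.trace ρ = 1

/-- The binary entropy `h(x) = -x log x - (1-x) log (1-x)`. -/
noncomputable def binEntropy (x : ℝ) : ℝ :=
  -(x * Real.log x) - (1 - x) * Real.log (1 - x)

/-- The Renyi relative entropy `H_a(ρ,γ) = (a-1)⁻¹ log Tr(ρ^a γ^(1-a))`. -/
noncomputable def renyiRel {m : Type*} [Fintype m] [DecidableEq m]
    (a : ℝ) (ρ γ : Matrix m m ℂ) : ℝ :=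
  (a - 1)⁻¹ * Real.log (Matrix.trace (matRpow a ρ * matRpow (1 - a) γ)).re

/-- The sandwiched Renyi relative entropy
`H̃_a(ρ,γ) = (a-1)⁻¹ log Tr((γ^((1-a)/(2a)) ρ γ^((1-a)/(2a)))^a)`. -/
noncomputable def sandRenyiRel {m : Type*} [Fintype m] [DecidableEq m]
    (a : ℝ) (ρ γ : Matrix m m ℂ) : ℝ :=
  (a - 1)⁻¹ * Real.log
    (Matrix.trace (matRpow a
      (matRpow ((1 - a) / (2 * a)) γ * ρ * matRpow ((1 - a) / (2 * a)) γ))).re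

noncomputable def dgR {n : ℕ} (d : Fin n → ℝ) : Matrix (Fin n) (Fin n) ℂ :=
  diagonal (fun i => (d i : ℂ))

lemma dgR_mul {n : ℕ} (d e : Fin n → ℝ) : dgR d * dgR e = dgR (fun i => d i * e i) := by
  simp [dgR, diagonal_mul_diagonal]

lemma dgR_ct {n : ℕ} (d : Fin n → ℝ) : (dgR d)ᴴ = dgR d := by
  simp [dgR, diagonal_conjTranspose, Pi.star_def]

lemma dgR_one {n : ℕ} : dgR (fun _ : Fin n => (1:ℝ)) = 1 := by
  simp [dgR]

lemma spec_ex {n : ℕ} (A : Matrix (Fin n) (Fin n) ℂ) (hA : A.IsHermitian) :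
    ∃ U : Matrix (Fin n) (Fin n) ℂ, Uᴴ * U = 1 ∧ U * Uᴴ = 1 ∧
      (∀ f : ℝ → ℝ, mfun f A = U * dgR (fun i => f (hA.eigenvalues i)) * Uᴴ) ∧
      A = U * dgR hA.eigenvalues * Uᴴ := by
  refine ⟨hA.eigenvectorUnitary, ?_, ?_, ?_, ?_⟩
  · exact Unitary.coe_star_mul_self hA.eigenvectorUnitary
  · exact Unitary.coe_mul_star_self hA.eigenvectorUnitary
  · intro f
    rw [mfun, dif_pos hA]
    rfl
  · conv_lhs => rw [hA.spectral_theorem]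
    rfl

lemma diag_entry {n : ℕ} (d : Fin n → ℝ) (M : Matrix (Fin n) (Fin n) ℂ) (i : Fin n) :
    (Mᴴ * dgR d * M) i i = ((∑ j, d j * ‖M j i‖ ^ 2 : ℝ) : ℂ) := by
  rw [Matrix.mul_apply]
  simp only [dgR, mul_diagonal, conjTranspose_apply]
  push_cast
  refine Finset.sum_congr rfl fun j _ => ?_
  have := Complex.conj_mul' (M j i)
  rw [← this]
  simp only [RCLike.star_def]
  ring

lemma unit_col {n : ℕ} (M : Matrix (Fin n) (Fin n) ℂ) (h : Mᴴ * M = 1) (i : Fin n) :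
    ∑ j, ‖M j i‖ ^ 2 = 1 := by
  have := diag_entry (fun _ => 1) M i
  rw [dgR_one, Matrix.mul_one, h, Matrix.one_apply_eq] at this
  simpa using (Complex.ofReal_injective (by simpa using this)).symm

lemma unit_row {n : ℕ} (M : Matrix (Fin n) (Fin n) ℂ) (h : M * Mᴴ = 1) (j : Fin n) :
    ∑ i, ‖M j i‖ ^ 2 = 1 := by
  have := unit_col Mᴴ (by simpa using h) j
  simpa using this

lemma sub_jensen {n : ℕ} (a : ℝ) (ha : 1 < a) (w y : Fin n → ℝ) (hw : ∀ i, 0 ≤ w i)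
    (hy : ∀ i, 0 ≤ y i) (h1 : ∑ i, w i ≤ 1) :
    (∑ i, w i * y i) ^ a ≤ ∑ i, w i * y i ^ a := by
  have h := Real.inner_le_weight_mul_Lp_of_nonneg Finset.univ ha.le w y hw hy
  have hn : 0 ≤ ∑ i, w i * y i ^ a :=
    Finset.sum_nonneg fun i _ => mul_nonneg (hw i) (Real.rpow_nonneg (hy i) _)
  have hn0 : 0 ≤ ∑ i, w i * y i :=
    Finset.sum_nonneg fun i _ => mul_nonneg (hw i) (hy i)
  have h2 : (∑ i, w i) ^ (1 - a⁻¹) ≤ 1 :=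
    Real.rpow_le_one (Finset.sum_nonneg fun i _ => hw i) h1
      (by have := inv_lt_one_of_one_lt₀ ha; linarith)
  have h3 : ∑ i, w i * y i ≤ (∑ i, w i * y i ^ a) ^ a⁻¹ := by
    refine h.trans ?_
    have := mul_le_mul_of_nonneg_right h2 (Real.rpow_nonneg hn a⁻¹)
    simpa using this
  calc _ ≤ ((∑ i, w i * y i ^ a) ^ a⁻¹) ^ a := Real.rpow_le_rpow hn0 h3 (by linarith)
    _ = _ := by rw [← Real.rpow_mul hn, inv_mul_cancel₀ (by linarith), Real.rpow_one]

lemma exp_jensen {n : ℕ} (w y : Fin n → ℝ) (hw : ∀ i, 0 ≤ w i) (h1 : ∑ i, w i = 1) :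
    Real.exp (∑ i, w i * y i) ≤ ∑ i, w i * Real.exp (y i) := by
  have := convexOn_exp.map_sum_le (t := Finset.univ) (w := w) (p := y) (fun i _ => hw i) h1
    (fun i _ => Set.mem_univ _)
  simpa using this

lemma trace_udu {n : ℕ} (U : Matrix (Fin n) (Fin n) ℂ) (h : Uᴴ * U = 1) (d : Fin n → ℝ) :
    trace (U * dgR d * Uᴴ) = ((∑ i, d i : ℝ) : ℂ) := by
  rw [Matrix.trace_mul_comm, ← Matrix.mul_assoc, h, Matrix.one_mul]
  simp [dgR, Matrix.trace_diagonal]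

lemma aux_alg {n : ℕ} (x : ℝ) (R Gi γ : Matrix (Fin n) (Fin n) ℂ) (h : Gi * γ = 1) :
    R * Gi * (γ - x • (R * R)) * (Gi * R)
      = R * Gi * R - x • (R * Gi * R * (R * Gi * R)) := by
  have e1 : R * Gi * γ = R := by rw [Matrix.mul_assoc, h, Matrix.mul_one]
  rw [Matrix.mul_sub, Matrix.sub_mul, e1]
  simp only [Matrix.mul_smul, Matrix.smul_mul, Matrix.mul_assoc]

set_option maxHeartbeats 1000000 in
lemma core {n : ℕ} (a : ℝ) (ha : 1 < a) (ρ γ : Matrix (Fin n) (Fin n) ℂ) (hρ : IsDensity ρ)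
    (hγ : γ.PosDef) (x : ℝ) (hx : 0 < x) (hle : (γ - x • ρ).PosSemidef) :
    Real.exp ((a - 1) * ((trace (ρ * matLog ρ)).re - (trace (ρ * matLog γ)).re)) ≤
      (Matrix.trace (matRpow a
      (matRpow ((1 - a) / (2 * a)) γ * ρ * matRpow ((1 - a) / (2 * a)) γ))).re ∧
    (Matrix.trace (matRpow a
      (matRpow ((1 - a) / (2 * a)) γ * ρ * matRpow ((1 - a) / (2 * a)) γ))).re ≤ x ^ (1 - a) := by
  obtain ⟨hρp, hρt⟩ := hρ
  have ha0 : a ≠ 0 := by linarith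
  set s := (1 - a) / (2 * a) with hs
  obtain ⟨U, hU1, hU2, hUf, hUρ⟩ := spec_ex ρ hρp.isHermitian
  obtain ⟨V, hV1, hV2, hVf, hVγ⟩ := spec_ex γ hγ.isHermitian
  have hp0 : ∀ i, 0 ≤ hρp.isHermitian.eigenvalues i := hρp.eigenvalues_nonneg
  have hg0 : ∀ i, 0 < hγ.isHermitian.eigenvalues i := hγ.eigenvalues_pos
  set p := hρp.isHermitian.eigenvalues with hp
  set g := hγ.isHermitian.eigenvalues with hg
  have hUc : ∀ X, Uᴴ * (U * X) = X := fun X => by rw [← Matrix.mul_assoc, hU1, Matrix.one_mul]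
  have hVc : ∀ X, Vᴴ * (V * X) = X := fun X => by rw [← Matrix.mul_assoc, hV1, Matrix.one_mul]
  have hUc' : ∀ X, U * (Uᴴ * X) = X := fun X => by rw [← Matrix.mul_assoc, hU2, Matrix.one_mul]
  have hVc' : ∀ X, V * (Vᴴ * X) = X := fun X => by rw [← Matrix.mul_assoc, hV2, Matrix.one_mul]
  have hdd : ∀ (d e : Fin n → ℝ) X, dgR d * (dgR e * X) = dgR (fun i => d i * e i) * X :=
    fun d e X => by rw [← Matrix.mul_assoc, dgR_mul]
  -- square root of ρ
  set R := U * dgR (fun i => √(p i)) * Uᴴ with hR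
  have hRh : Rᴴ = R := by
    simp only [hR, conjTranspose_mul, conjTranspose_conjTranspose, dgR_ct, Matrix.mul_assoc]
  have hRR : R * R = ρ := by
    rw [hUρ]
    simp only [hR, Matrix.mul_assoc, hUc, hdd]
    simp only [Real.mul_self_sqrt (hp0 _)]
  -- powers of γ
  set G := matRpow s γ with hG
  have hGe : G = V * dgR (fun i => g i ^ s) * Vᴴ := hVf _
  have hGh : Gᴴ = G := by
    simp only [hGe, conjTranspose_mul, conjTranspose_conjTranspose, dgR_ct, Matrix.mul_assoc]
  have hGG : G * G = V * dgR (fun i => g i ^ (2 * s)) * Vᴴ := by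
    simp only [hGe, Matrix.mul_assoc, hVc, hdd]
    congr 3; ext i
    rw [← Real.rpow_add (hg0 i)]; ring_nf
  set A := G * ρ * G with hA
  set B := R * (G * G) * R with hB
  have hAe : A = (G * R) * (R * G) := by rw [hA, ← hRR]; simp only [Matrix.mul_assoc]
  have hBe : B = (R * G) * (G * R) := by rw [hB]; simp only [Matrix.mul_assoc]
  have hAh : A.IsHermitian := by
    rw [Matrix.IsHermitian, hAe]
    simp only [conjTranspose_mul, hGh, hRh]
  have hBp : B.PosSemidef := by
    have := Matrix.posSemidef_conjTranspose_mul_self (G * R)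
    rwa [conjTranspose_mul, hGh, hRh, ← hBe] at this
  have heig : hAh.eigenvalues = hBp.isHermitian.eigenvalues := by
    rw [Matrix.IsHermitian.eigenvalues_eq_eigenvalues_iff, hAe, hBe, charpoly_mul_comm]
  obtain ⟨W₀, hW01, hW02, hW0f, -⟩ := spec_ex A hAh
  obtain ⟨W, hW1, hW2, hWf, hWB⟩ := spec_ex B hBp.isHermitian
  have hl0 : ∀ i, 0 ≤ hBp.isHermitian.eigenvalues i := hBp.eigenvalues_nonneg
  set l := hBp.isHermitian.eigenvalues with hl
  have hT : (trace (matRpow a A)).re = ∑ i, l i ^ a := by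
    rw [matRpow, hW0f, trace_udu _ hW01, heig]
    simp
  rw [hT]
  have hWc : ∀ X, Wᴴ * (W * X) = X := fun X => by rw [← Matrix.mul_assoc, hW1, Matrix.one_mul]
  have hWc' : ∀ X, W * (Wᴴ * X) = X := fun X => by rw [← Matrix.mul_assoc, hW2, Matrix.one_mul]
  have h2s : a * (2 * s) = 1 - a := by rw [hs]; field_simp
  constructor
  · set Q := Vᴴ * U with hQ
    set Z := Wᴴ * U with hZ
    have hQ1 : Qᴴ * Q = 1 := by
      simp only [hQ, conjTranspose_mul, conjTranspose_conjTranspose, Matrix.mul_assoc, hVc', hU1]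
    have hZ1 : Zᴴ * Z = 1 := by
      simp only [hZ, conjTranspose_mul, conjTranspose_conjTranspose, Matrix.mul_assoc, hWc', hU1]
    have hZ2 : Z * Zᴴ = 1 := by
      simp only [hZ, conjTranspose_mul, conjTranspose_conjTranspose, Matrix.mul_assoc, hUc', hW1]
    have hpsum : ∑ i, p i = 1 := by
      have : trace ρ = ((∑ i, p i : ℝ) : ℂ) := by
        conv_lhs => rw [hUρ]
        exact trace_udu U hU1 p
      rw [hρt] at this
      exact_mod_cast this.symm
    have hS1 : (trace (ρ * matLog ρ)).re = ∑ i, p i * Real.log (p i) := by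
      have : ρ * matLog ρ = U * dgR (fun i => p i * Real.log (p i)) * Uᴴ := by
        rw [matLog, hUf]
        conv_lhs => rw [hUρ]
        simp only [Matrix.mul_assoc, hUc, hdd]
      rw [this, trace_udu U hU1, Complex.ofReal_re]
    have hS2 : (trace (ρ * matLog γ)).re
        = ∑ i, p i * ∑ j, ‖Q j i‖ ^ 2 * Real.log (g j) := by
      have : trace (ρ * matLog γ) = trace (dgR p * (Qᴴ * dgR (fun j => Real.log (g j)) * Q)) := by
        rw [matLog, hVf]
        conv_lhs => rw [hUρ]
        rw [Matrix.mul_assoc, Matrix.mul_assoc, Matrix.trace_mul_comm]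
        simp only [hQ, conjTranspose_mul, conjTranspose_conjTranspose, Matrix.mul_assoc]
      rw [this, Matrix.trace]
      simp only [Matrix.diag_apply]
      simp only [dgR, diagonal_mul]
      have e := diag_entry (fun j => Real.log (g j)) Q
      simp only [dgR] at e
      simp only [e, ← Complex.ofReal_mul, ← Complex.ofReal_sum, Complex.ofReal_re]
      simp only [mul_comm]
    have hd1 : ∀ i, (∑ k, ‖Z k i‖ ^ 2 * l k) = p i * ∑ j, ‖Q j i‖ ^ 2 * g j ^ (2 * s) := by
      intro i
      have e1 := diag_entry l Z i
      have e2 : Zᴴ * dgR l * Z = dgR (fun i => √(p i)) *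
          (Qᴴ * dgR (fun j => g j ^ (2 * s)) * Q) * dgR (fun i => √(p i)) := by
        have : Zᴴ * dgR l * Z = Uᴴ * B * U := by
          conv_rhs => rw [hWB]
          simp only [hZ, conjTranspose_mul, conjTranspose_conjTranspose, Matrix.mul_assoc]
        rw [this, hB, hGG]
        simp only [hR, hQ, conjTranspose_mul, conjTranspose_conjTranspose, Matrix.mul_assoc, hUc,
          hU1, Matrix.mul_one]
      have e3 := diag_entry (fun j => g j ^ (2 * s)) Q i
      rw [e2] at e1
      simp only [dgR] at e1 e3
      rw [mul_diagonal, diagonal_mul, e3] at e1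
      have e4 : √(p i) * (∑ j, g j ^ (2 * s) * ‖Q j i‖ ^ 2) * √(p i)
          = ∑ j, l j * ‖Z j i‖ ^ 2 := by exact_mod_cast e1
      simp only [mul_comm] at e4 ⊢
      rw [← e4, ← mul_assoc, Real.mul_self_sqrt (hp0 i)]
    have hpe : ∑ i, (∑ k, ‖Z k i‖ ^ 2 * l k) ^ a ≤ ∑ k, l k ^ a := by
      calc _ ≤ ∑ i, ∑ k, ‖Z k i‖ ^ 2 * l k ^ a := Finset.sum_le_sum fun i _ =>
            sub_jensen a ha _ _ (fun k => by positivity) hl0 (unit_col Z hZ1 i).le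
        _ = ∑ k, l k ^ a := by
            rw [Finset.sum_comm]
            refine Finset.sum_congr rfl fun k _ => ?_
            rw [← Finset.sum_mul, unit_row Z hZ2, one_mul]
    refine le_trans ?_ hpe
    rw [hS1, hS2, ← Finset.sum_sub_distrib, Finset.mul_sum]
    set L := fun i => ∑ j, ‖Q j i‖ ^ 2 * Real.log (g j) with hL
    have := exp_jensen p (fun i => (a - 1) * (Real.log (p i) - L i)) hp0 hpsum
    refine le_trans (le_of_eq ?_) (this.trans (Finset.sum_le_sum fun i _ => ?_))
    · congr 1
      refine Finset.sum_congr rfl fun i _ => ?_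
      simp only [hL]
      ring
    · rw [hd1]
      rcases (hp0 i).eq_or_lt with h | h
      · rw [← h]; simp [Real.zero_rpow ha0]
      · have hE : Real.exp (2 * s * L i) ≤ ∑ j, ‖Q j i‖ ^ 2 * g j ^ (2 * s) := by
          have := exp_jensen (fun j => ‖Q j i‖ ^ 2) (fun j => Real.log (g j) * (2 * s))
            (fun j => by positivity) (unit_col Q hQ1 i)
          simp only [← Real.rpow_def_of_pos (hg0 _)] at this
          refine le_trans (le_of_eq ?_) this
          congr 1
          rw [hL, Finset.mul_sum]
          exact Finset.sum_congr rfl fun j _ => by ring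
        calc p i * Real.exp ((a - 1) * (Real.log (p i) - L i))
            = (p i * Real.exp (2 * s * L i)) ^ a := by
              have hpi : p i = Real.exp (Real.log (p i)) := (Real.exp_log h).symm
              have e : p i * Real.exp (2 * s * L i) = Real.exp (Real.log (p i) + 2 * s * L i) := by
                rw [Real.exp_add, ← hpi]
              rw [e, ← Real.exp_mul]
              conv_lhs => rw [hpi, Real.log_exp]
              rw [← Real.exp_add]
              congr 1
              linear_combination (-L i) * h2s
          _ ≤ _ := by gcongr
  · set M := Vᴴ * R * W with hM
    have hMh : Mᴴ = Wᴴ * R * V := by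
      simp only [hM, conjTranspose_mul, conjTranspose_conjTranspose, hRh, Matrix.mul_assoc]
    -- eigenvalues
    have hlk : ∀ k, l k = ∑ j, g j ^ (2 * s) * ‖M j k‖ ^ 2 := by
      intro k
      have e := diag_entry (fun j => g j ^ (2 * s)) M k
      have : Mᴴ * dgR (fun j => g j ^ (2 * s)) * M = dgR l := by
        have : Mᴴ * dgR (fun j => g j ^ (2 * s)) * M = Wᴴ * B * W := by
          rw [hB, hGG, hMh, hM]; simp only [Matrix.mul_assoc]
        rw [this]
        conv_lhs => rw [hWB]
        simp only [Matrix.mul_assoc, hWc, hW1, Matrix.mul_one]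
      rw [this] at e
      simp only [dgR, diagonal_apply_eq] at e
      exact_mod_cast e
    have hMsum : ∑ k, ∑ j, ‖M j k‖ ^ 2 = 1 := by
      have e := diag_entry (fun _ => 1) M
      have e2 : trace (Mᴴ * dgR (fun _ => 1) * M) = 1 := by
        rw [dgR_one, Matrix.mul_one, Matrix.trace_mul_comm, hMh, hM]
        simp only [Matrix.mul_assoc, hWc']
        rw [Matrix.trace_mul_comm]
        simp only [Matrix.mul_assoc, hV2, Matrix.mul_one]
        rw [hRR, hρt]
      rw [Matrix.trace] at e2
      simp only [Matrix.diag_apply, e, one_mul] at e2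
      exact_mod_cast e2
    set Gi := V * dgR (fun j => (g j)⁻¹) * Vᴴ with hGi
    have hGih : Giᴴ = Gi := by
      simp only [hGi, conjTranspose_mul, conjTranspose_conjTranspose, dgR_ct, Matrix.mul_assoc]
    have hGiγ : Gi * γ = 1 := by
      have : γ = V * dgR g * Vᴴ := hVγ
      rw [this]
      simp only [hGi, Matrix.mul_assoc, hVc, hdd]
      simp only [inv_mul_cancel₀ (hg0 _).ne', dgR_one, Matrix.one_mul, hV2]
    set N := R * Gi * R with hN
    have hNh : Nᴴ = N := by
      simp only [hN, conjTranspose_mul, hGih, hRh, Matrix.mul_assoc]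
    have hNp : (1 - x • N).PosSemidef := by
      have q1 : (N - x • (N * N)).PosSemidef := by
        have := hle.conjTranspose_mul_mul_same (Gi * R)
        have e : (Gi * R)ᴴ * (γ - x • ρ) * (Gi * R) = N - x • (N * N) := by
          rw [conjTranspose_mul, hGih, hRh, ← hRR, hN]
          exact aux_alg x R Gi γ hGiγ
        rwa [e] at this
      have q2 : ((x • N - 1) * (x • N - 1)).PosSemidef := by
        have := Matrix.posSemidef_conjTranspose_mul_self (x • N - 1)
        have e : (x • N - 1)ᴴ = x • N - 1 := by
          simp [conjTranspose_sub, conjTranspose_smul, hNh]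
        rwa [e] at this
      have q3 : (x • (N - x • (N * N))).PosSemidef := q1.smul hx.le
      have := q2.add q3
      convert! this using 1
      simp only [Matrix.mul_sub, Matrix.sub_mul, Matrix.mul_smul, Matrix.smul_mul, smul_sub,
        Matrix.mul_one, Matrix.one_mul]
      abel
    have hw : ∀ k, ∑ j, x * (g j)⁻¹ * ‖M j k‖ ^ 2 ≤ 1 := by
      intro k
      have e := diag_entry (fun j => (g j)⁻¹) M k
      have e1 : Mᴴ * dgR (fun j => (g j)⁻¹) * M = Wᴴ * N * W := by
        rw [hN, hMh, hM]; simp only [hGi, Matrix.mul_assoc]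
      have e2 : (Wᴴ * (1 - x • N) * W) = 1 - x • (Mᴴ * dgR (fun j => (g j)⁻¹) * M) := by
        rw [e1]
        simp only [Matrix.mul_sub, Matrix.sub_mul, Matrix.mul_smul, Matrix.smul_mul,
          Matrix.mul_one, hW1]
      have e3 := (hNp.conjTranspose_mul_mul_same W).diag_nonneg (i := k)
      rw [e2, Matrix.sub_apply, Matrix.smul_apply, e, Matrix.one_apply_eq] at e3
      have e4 : (0:ℝ) ≤ 1 - x * ∑ j, (g j)⁻¹ * ‖M j k‖ ^ 2 := by
        rw [Complex.real_smul] at e3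
        exact_mod_cast e3
      simp only [mul_assoc, ← Finset.mul_sum]
      linarith
    have hk : ∀ k, (x * l k) ^ a ≤ x * ∑ j, ‖M j k‖ ^ 2 := by
      intro k
      have hsj := sub_jensen a ha (fun j => x * (g j)⁻¹ * ‖M j k‖ ^ 2) (fun j => g j ^ a⁻¹)
        (fun j => by have := hg0 j; positivity) (fun j => by have := hg0 j; positivity) (hw k)
      have e1 : x * l k = ∑ j, x * (g j)⁻¹ * ‖M j k‖ ^ 2 * g j ^ a⁻¹ := by
        rw [hlk, Finset.mul_sum]
        refine Finset.sum_congr rfl fun j _ => ?_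
        have : g j ^ (2 * s) = (g j)⁻¹ * g j ^ a⁻¹ := by
          rw [← Real.rpow_neg_one, ← Real.rpow_add (hg0 j)]
          congr 1
          rw [hs]; field_simp; ring
        rw [this]; ring
      rw [e1]
      refine hsj.trans (le_of_eq ?_)
      rw [Finset.mul_sum]
      refine Finset.sum_congr rfl fun j _ => ?_
      rw [← Real.rpow_mul (hg0 j).le, inv_mul_cancel₀ ha0, Real.rpow_one]
      have := (hg0 j).ne'
      field_simp
    have hfin : x ^ a * ∑ k, l k ^ a ≤ x := by
      calc x ^ a * ∑ k, l k ^ a = ∑ k, (x * l k) ^ a := by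
            rw [Finset.mul_sum]
            exact Finset.sum_congr rfl fun k _ => (Real.mul_rpow hx.le (hl0 k)).symm
        _ ≤ ∑ k, x * ∑ j, ‖M j k‖ ^ 2 := Finset.sum_le_sum fun k _ => hk k
        _ = x := by rw [← Finset.mul_sum, hMsum, mul_one]
    rw [Real.rpow_sub hx, Real.rpow_one, le_div_iff₀ (by positivity)]
    linarith

lemma core2 {n : ℕ} (a : ℝ) (ha : 1 < a) (ρ γ : Matrix (Fin n) (Fin n) ℂ) (hρ : IsDensity ρ)
    (hγ : γ.PosDef) (x : ℝ) (hx : 0 < x) (hle : (γ - x • ρ).PosSemidef) :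
    (trace (ρ * matLog ρ)).re - (trace (ρ * matLog γ)).re ≤ sandRenyiRel a ρ γ ∧
    sandRenyiRel a ρ γ ≤ - Real.log x := by
  obtain ⟨h1, h2⟩ := core a ha ρ γ hρ hγ x hx hle
  have hpos := (Real.exp_pos _).trans_le h1
  have ha1 : 0 < a - 1 := by linarith
  unfold sandRenyiRel
  constructor
  · rw [inv_mul_eq_div, le_div_iff₀ ha1, mul_comm]
    exact (Real.le_log_iff_exp_le hpos).2 h1
  · rw [inv_mul_eq_div, div_le_iff₀ ha1]
    refine (Real.log_le_log hpos h2).trans (le_of_eq ?_)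
    rw [Real.log_rpow hx]; ring

theorem mosonyi_bounds (n : ℕ) (hn : 1 ≤ n) (x : ℝ) (hx : x ∈ Set.Ioo (0:ℝ) 1)
    (a : ℝ) (ha : 1 < a)
    (ρ₁ ρ₂ : Matrix (Fin n) (Fin n) ℂ) (h1 : IsDensity ρ₁) (h2 : IsDensity ρ₂)
    (hAv : (x • ρ₁ + (1 - x) • ρ₂).PosDef) :
    binEntropy x
      ≥ x * sandRenyiRel a ρ₁ (x • ρ₁ + (1 - x) • ρ₂)
          + (1 - x) * sandRenyiRel a ρ₂ (x • ρ₁ + (1 - x) • ρ₂)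
    ∧ x * sandRenyiRel a ρ₁ (x • ρ₁ + (1 - x) • ρ₂)
          + (1 - x) * sandRenyiRel a ρ₂ (x • ρ₁ + (1 - x) • ρ₂)
      ≥ vnEntropy (x • ρ₁ + (1 - x) • ρ₂) - x * vnEntropy ρ₁ - (1 - x) * vnEntropy ρ₂ := by
  obtain ⟨hx0, hx1⟩ := hx
  have hy0 : 0 < 1 - x := by linarith
  set γ := x • ρ₁ + (1 - x) • ρ₂ with hγ
  obtain ⟨l1, u1⟩ := core2 a ha ρ₁ γ h1 hAv x hx0 (by
    have : γ - x • ρ₁ = (1 - x) • ρ₂ := by rw [hγ]; abel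
    rw [this]; exact h2.1.smul hy0.le)
  obtain ⟨l2, u2⟩ := core2 a ha ρ₂ γ h2 hAv (1 - x) hy0 (by
    have : γ - (1 - x) • ρ₂ = x • ρ₁ := by rw [hγ]; abel
    rw [this]; exact h1.1.smul hx0.le)
  have hS : (trace (γ * matLog γ)).re
      = x * (trace (ρ₁ * matLog γ)).re + (1 - x) * (trace (ρ₂ * matLog γ)).re := by
    have : trace (γ * matLog γ)
        = x • trace (ρ₁ * matLog γ) + (1 - x) • trace (ρ₂ * matLog γ) := by
      conv_lhs => rw [hγ, Matrix.add_mul, Matrix.smul_mul, Matrix.smul_mul, trace_add, trace_smul,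
        trace_smul, ← hγ]
    rw [this, Complex.add_re, Complex.smul_re, Complex.smul_re]
    simp
  constructor
  · unfold binEntropy
    nlinarith [mul_le_mul_of_nonneg_left u1 hx0.le, mul_le_mul_of_nonneg_left u2 hy0.le]
  · unfold vnEntropy
    rw [hS]
    nlinarith [mul_le_mul_of_nonneg_left l1 hx0.le, mul_le_mul_of_nonneg_left l2 hy0.le]
end

section
/- Let n ≥ 1 and let ρ, γ be density matrices (n×n complex positive semidefinite matrices of trace 1) with γ positive definite. Then H(ρ, γ) ≥ −2·log( Tr(√ρ · √γ) ). -/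
open Matrix ComplexOrder

theorem aux_trace {m : Type*} [Fintype m] [DecidableEq m]
    {A B : Matrix m m ℂ} (hA : A.IsHermitian) (hB : B.IsHermitian) :
    ∃ w : m → m → ℝ, (∀ i j, 0 ≤ w i j) ∧ ∀ f g : ℝ → ℝ,
      (Matrix.trace (hA.cfc f * hB.cfc g)).re =
        ∑ i, ∑ j, w i j * (f (hA.eigenvalues i) * g (hB.eigenvalues j)) := by
  let U : Matrix m m ℂ := hA.eigenvectorUnitary
  let V : Matrix m m ℂ := hB.eigenvectorUnitary
  let W : Matrix m m ℂ := star U * V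
  refine ⟨fun i j => Complex.normSq (W i j), fun i j => Complex.normSq_nonneg _, fun f g => ?_⟩
  have h1 : Matrix.trace (hA.cfc f * hB.cfc g) =
      Matrix.trace (diagonal (fun i => ((f (hA.eigenvalues i) : ℝ) : ℂ)) * W *
        diagonal (fun i => ((g (hB.eigenvalues i) : ℝ) : ℂ)) * Wᴴ) := by
    have hW : Wᴴ = star V * U := by
      simp [W, Matrix.star_eq_conjTranspose]
    rw [hW]
    simp only [IsHermitian.cfc, Unitary.conjStarAlgAut_apply]
    change Matrix.trace (U * diagonal (fun i => ((f (hA.eigenvalues i) : ℝ) : ℂ)) * star U *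
      (V * diagonal (fun i => ((g (hB.eigenvalues i) : ℝ) : ℂ)) * star V)) = _
    simp only [Matrix.mul_assoc]
    rw [Matrix.trace_mul_comm]
    simp only [W, Matrix.mul_assoc]
  rw [h1]
  simp only [Matrix.trace, Matrix.diag, Matrix.mul_apply (N := Wᴴ), Matrix.mul_diagonal,
    Matrix.diagonal_mul, Matrix.conjTranspose_apply, Complex.re_sum]
  refine Finset.sum_congr rfl fun i _ => Finset.sum_congr rfl fun j _ => ?_
  simp [Complex.normSq_apply]
  ring

theorem aux_scalar (p q w S : ℝ) (hp : 0 ≤ p) (hq : 0 < q) (hw : 0 ≤ w) (hS : 0 < S) :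
    -2 * Real.log S * (w * p) - 2 * (w * (Real.sqrt p * Real.sqrt q) / S - w * p) ≤
      w * (p * Real.log p) - w * (p * Real.log q) := by
  rcases hp.eq_or_lt with rfl | hp
  · simp
  have a : 0 < Real.sqrt p := Real.sqrt_pos.2 hp
  have b : 0 < Real.sqrt q := Real.sqrt_pos.2 hq
  have h := Real.log_le_sub_one_of_pos (show 0 < Real.sqrt q / (Real.sqrt p * S) by positivity)
  rw [Real.log_div b.ne' (by positivity), Real.log_mul a.ne' hS.ne', Real.log_sqrt hp.le,
    Real.log_sqrt hq.le] at h
  have h2 := mul_le_mul_of_nonneg_left h (show 0 ≤ w * p by positivity)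
  have e : w * p * (Real.sqrt q / (Real.sqrt p * S) - 1) =
      w * (Real.sqrt p * Real.sqrt q) / S - w * p := by
    have : p = Real.sqrt p * Real.sqrt p := (Real.mul_self_sqrt hp.le).symm
    generalize Real.sqrt p = r at *
    subst this
    field_simp
  rw [e] at h2
  linarith

theorem aux_cfc_one {m : Type*} [Fintype m] [DecidableEq m]
    {A : Matrix m m ℂ} (hA : A.IsHermitian) : hA.cfc (fun _ => 1) = 1 := by
  rw [← hA.cfc_eq]
  exact cfc_const_one ℝ A hA

theorem aux_cfc_id {m : Type*} [Fintype m] [DecidableEq m]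
    {A : Matrix m m ℂ} (hA : A.IsHermitian) : hA.cfc (fun x => x) = A := by
  rw [← hA.cfc_eq]
  exact cfc_id' ℝ A hA

theorem aux_cfc_mul {m : Type*} [Fintype m] [DecidableEq m]
    {A : Matrix m m ℂ} (hA : A.IsHermitian) (f g : ℝ → ℝ) :
    hA.cfc (fun x => f x * g x) = hA.cfc f * hA.cfc g := by
  simp only [IsHermitian.cfc, ← map_mul, diagonal_mul_diagonal]
  congr 2
  ext i
  simp

theorem relEntropy_ge_neg_two_log_fidelity (n : ℕ) (hn : 1 ≤ n)
    (ρ γ : Matrix (Fin n) (Fin n) ℂ) (hρ : IsDensity ρ) (hγ : IsDensity γ)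
    (hγ' : γ.PosDef) :
    relEntropy ρ γ ≥ -2 * Real.log (Matrix.trace (matSqrt ρ * matSqrt γ)).re := by
  have hA := hρ.1.isHermitian
  have hB := hγ.1.isHermitian
  obtain ⟨w, hw, T⟩ := aux_trace hA hB
  have hp := hρ.1.eigenvalues_nonneg
  have hq := hγ'.eigenvalues_pos
  have hone : ∑ i, ∑ j, w i j * hA.eigenvalues i = 1 := by
    have h := T (fun x => x) (fun _ => 1)
    rw [aux_cfc_one, aux_cfc_id, mul_one, hρ.2] at h
    simpa using h.symm
  have hH : relEntropy ρ γ = ∑ i, ∑ j,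
      (w i j * (hA.eigenvalues i * Real.log (hA.eigenvalues i)) -
        w i j * (hA.eigenvalues i * Real.log (hB.eigenvalues j))) := by
    have h1 := T (fun x => x * Real.log x) (fun _ => 1)
    have h2 := T (fun x => x) Real.log
    rw [aux_cfc_mul hA (fun x => x) Real.log, aux_cfc_one, aux_cfc_id, mul_one] at h1
    rw [aux_cfc_id] at h2
    simp only [relEntropy, matLog, mfun, dif_pos hA, dif_pos hB, Matrix.mul_sub, Matrix.trace_sub,
      Complex.sub_re, h1, h2, Finset.sum_sub_distrib, mul_one]
  have hF := T Real.sqrt Real.sqrt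
  have hF' : (Matrix.trace (matSqrt ρ * matSqrt γ)).re = ∑ i, ∑ j,
      w i j * (Real.sqrt (hA.eigenvalues i) * Real.sqrt (hB.eigenvalues j)) := by
    simp only [matSqrt, mfun, dif_pos hA, dif_pos hB, hF]
  rw [hH, hF', ge_iff_le]
  set S := ∑ i, ∑ j,
      w i j * (Real.sqrt (hA.eigenvalues i) * Real.sqrt (hB.eigenvalues j)) with hSdef
  have hnn : ∀ i j,
      0 ≤ w i j * (Real.sqrt (hA.eigenvalues i) * Real.sqrt (hB.eigenvalues j)) :=
    fun i j => mul_nonneg (hw i j) (by positivity)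
  have hS : 0 < S := by
    refine lt_of_le_of_ne (Finset.sum_nonneg fun i _ => Finset.sum_nonneg fun j _ => hnn i j) ?_
    intro h0
    have h1 : ∀ i j, w i j * hA.eigenvalues i = 0 := by
      intro i j
      have h2 := (Finset.sum_eq_zero_iff_of_nonneg
        (fun i _ => Finset.sum_nonneg fun j _ => hnn i j)).1 h0.symm i (Finset.mem_univ i)
      have h3 := (Finset.sum_eq_zero_iff_of_nonneg (fun j _ => hnn i j)).1 h2 j (Finset.mem_univ j)
      have h4 := (Real.sqrt_pos.2 (hq j)).ne'
      rcases mul_eq_zero.1 h3 with h | h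
      · rw [h, zero_mul]
      · rcases mul_eq_zero.1 h with h | h
        · rw [(Real.sqrt_eq_zero (hp i)).1 h, mul_zero]
        · exact absurd h h4
    simp [h1] at hone
  have key := Finset.sum_le_sum fun i (_ : i ∈ Finset.univ) =>
    Finset.sum_le_sum fun j (_ : j ∈ Finset.univ) =>
      aux_scalar (hA.eigenvalues i) (hB.eigenvalues j) (w i j) S (hp i) (hq j) (hw i j) hS
  refine le_trans (le_of_eq ?_) key
  simp only [Finset.sum_sub_distrib, ← Finset.mul_sum, ← Finset.sum_div]
  simp only [Finset.mul_sum] at hSdef ⊢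
  simp only [← Finset.mul_sum, hone]
  simp only [Finset.mul_sum, ← hSdef]
  rw [div_self hS.ne']
  ring
end

section
/- Let n ≥ 1, let a ∈ (1, 2], and let ρ₁, ρ₂ be density matrices (n×n complex positive semidefinite matrices of trace 1) such that ρ_Av := (ρ₁ + ρ₂)/2 is positive definite. Then log 2 ≥ (1/2)·[ H_a(ρ₁, ρ_Av) + H_a(ρ₂, ρ_Av) ] ≥ S(ρ_Av) − (1/2)·S(ρ₁) − (1/2)·S(ρ₂). -/
open Matrix ComplexOrder

namespace RenyiAux

open scoped MatrixOrder Matrix.Norms.L2Operator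

variable {m : Type*} [Fintype m] [DecidableEq m]

lemma mfun_eq {A : Matrix m m ℂ} (hA : A.IsHermitian) (f : ℝ → ℝ) :
    mfun f A = cfc f A := by
  rw [mfun, dif_pos hA, hA.cfc_eq]

lemma mfun_unfold {A : Matrix m m ℂ} (hA : A.IsHermitian) (f : ℝ → ℝ) :
    mfun f A = (hA.eigenvectorUnitary : Matrix m m ℂ) *
      diagonal (fun i => ((f (hA.eigenvalues i) : ℝ) : ℂ)) *
      (hA.eigenvectorUnitary : Matrix m m ℂ)ᴴ := by
  rw [mfun, dif_pos hA, Matrix.IsHermitian.cfc, Unitary.conjStarAlgAut_apply]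
  rfl

lemma mfun_herm {A : Matrix m m ℂ} (hA : A.IsHermitian) (f : ℝ → ℝ) :
    (mfun f A)ᴴ = mfun f A := by
  rw [mfun_unfold hA]
  simp only [conjTranspose_mul, conjTranspose_conjTranspose, diagonal_conjTranspose, mul_assoc]
  congr 3
  ext i
  simp

lemma mfun_congr {A : Matrix m m ℂ} (hA : A.IsHermitian) {f g : ℝ → ℝ}
    (h : ∀ i, f (hA.eigenvalues i) = g (hA.eigenvalues i)) : mfun f A = mfun g A := by
  rw [mfun_unfold hA, mfun_unfold hA]
  simp only [h]

lemma mfun_mul {A : Matrix m m ℂ} (hA : A.IsHermitian) (f g : ℝ → ℝ) :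
    mfun f A * mfun g A = mfun (fun u => f u * g u) A := by
  rw [mfun, mfun, mfun, dif_pos hA, dif_pos hA, dif_pos hA]
  simp only [Matrix.IsHermitian.cfc, ← map_mul, diagonal_mul_diagonal]
  congr 2
  ext i
  simp

lemma mfun_one {A : Matrix m m ℂ} (hA : A.IsHermitian) :
    mfun (fun _ => 1) A = 1 := by
  rw [mfun_eq hA]
  exact cfc_const_one ℝ A hA

lemma mfun_id {A : Matrix m m ℂ} (hA : A.IsHermitian) :
    mfun (fun u => u) A = A := by
  rw [mfun_eq hA]
  exact cfc_id' ℝ A hA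

/-- overlap weights -/
noncomputable def wt {A B : Matrix m m ℂ} (hA : A.IsHermitian) (hB : B.IsHermitian)
    (i j : m) : ℝ :=
  Complex.normSq (((hA.eigenvectorUnitary : Matrix m m ℂ)ᴴ *
    (hB.eigenvectorUnitary : Matrix m m ℂ)) i j)

lemma trace_two {A B : Matrix m m ℂ} (hA : A.IsHermitian) (hB : B.IsHermitian)
    (f g : ℝ → ℝ) :
    (Matrix.trace (mfun f A * mfun g B)).re =
      ∑ i, ∑ j, wt hA hB i j * (f (hA.eigenvalues i) * g (hB.eigenvalues j)) := by
  rw [mfun_unfold hA, mfun_unfold hB]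
  set U := (hA.eigenvectorUnitary : Matrix m m ℂ) with hU
  set V := (hB.eigenvectorUnitary : Matrix m m ℂ) with hV
  set D := diagonal (fun i => ((f (hA.eigenvalues i) : ℝ) : ℂ)) with hD
  set E := diagonal (fun i => ((g (hB.eigenvalues i) : ℝ) : ℂ)) with hE
  have h1 : Matrix.trace (U * D * Uᴴ * (V * E * Vᴴ)) =
      Matrix.trace (D * (Uᴴ * V) * (E * (Uᴴ * V)ᴴ)) := by
    rw [show U * D * Uᴴ * (V * E * Vᴴ) = U * (D * Uᴴ * V * E * Vᴴ) by simp only [mul_assoc],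
      Matrix.trace_mul_comm]
    simp only [conjTranspose_mul, conjTranspose_conjTranspose, mul_assoc]
  rw [h1, Matrix.trace, Complex.re_sum]
  refine Finset.sum_congr rfl fun i _ => ?_
  rw [Matrix.diag_apply, Matrix.mul_apply, Complex.re_sum]
  refine Finset.sum_congr rfl fun j _ => ?_
  rw [hD, hE, diagonal_mul, diagonal_mul, conjTranspose_apply]
  simp only [wt, Complex.normSq_apply, ← hU, ← hV]
  simp [Complex.mul_re, Complex.mul_im]
  ring

lemma wt_nonneg {A B : Matrix m m ℂ} (hA : A.IsHermitian) (hB : B.IsHermitian) (i j : m) :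
    0 ≤ wt hA hB i j := Complex.normSq_nonneg _


lemma main_ineq {A B : Matrix m m ℂ} (hA : IsDensity A) (hB : B.PosDef) {a : ℝ} (ha : 1 < a) :
    0 < (Matrix.trace (matRpow a A * matRpow (1 - a) B)).re ∧
    (Matrix.trace (A * matLog A)).re - (Matrix.trace (A * matLog B)).re ≤ renyiRel a A B := by
  have hAh := hA.1.isHermitian
  have hBh := hB.isHermitian
  have hl : ∀ i, 0 ≤ hAh.eigenvalues i := hA.1.eigenvalues_nonneg
  have hm : ∀ i, 0 < hBh.eigenvalues i := hB.eigenvalues_pos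
  have e1 : (Matrix.trace (A * matLog A)).re =
      ∑ i, ∑ j, wt hAh hBh i j * (hAh.eigenvalues i * Real.log (hAh.eigenvalues i)) := by
    have := trace_two hAh hBh (fun u => u * Real.log u) (fun _ => 1)
    rw [mfun_one hBh, mul_one, ← mfun_mul hAh, mfun_id hAh] at this
    simpa [matLog] using this
  have e2 : (Matrix.trace (A * matLog B)).re =
      ∑ i, ∑ j, wt hAh hBh i j * (hAh.eigenvalues i * Real.log (hBh.eigenvalues j)) := by
    have := trace_two hAh hBh (fun u => u) Real.log
    rwa [mfun_id hAh] at this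
  have e3 : (1:ℝ) = ∑ i, ∑ j, wt hAh hBh i j * hAh.eigenvalues i := by
    have := trace_two hAh hBh (fun u => u) (fun _ => 1)
    rw [mfun_one hBh, mul_one, mfun_id hAh, hA.2] at this
    simpa using this
  have e4 := trace_two hAh hBh (fun u => u ^ a) (fun u => u ^ (1 - a))
  rw [renyiRel, matRpow, matRpow]
  set T := (Matrix.trace (mfun (fun u => u ^ a) A * mfun (fun u => u ^ (1 - a)) B)).re with hT
  have hw := wt_nonneg hAh hBh
  have hterm : ∀ i j, 0 ≤ wt hAh hBh i j * (hAh.eigenvalues i ^ a * hBh.eigenvalues j ^ (1 - a)) :=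
    fun i j => mul_nonneg (hw i j) (mul_nonneg (Real.rpow_nonneg (hl i) _)
      (Real.rpow_nonneg (hm j).le _))
  have hT0 : 0 < T := by
    obtain ⟨i, -, hi⟩ := Finset.exists_ne_zero_of_sum_ne_zero (e3 ▸ one_ne_zero)
    obtain ⟨j, -, hij⟩ := Finset.exists_ne_zero_of_sum_ne_zero hi
    have h1 : 0 < wt hAh hBh i j := lt_of_le_of_ne (hw i j) (Ne.symm (left_ne_zero_of_mul hij))
    have h2 : 0 < hAh.eigenvalues i := lt_of_le_of_ne (hl i) (Ne.symm (right_ne_zero_of_mul hij))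
    rw [e4]
    refine Finset.sum_pos' (fun i _ => Finset.sum_nonneg fun j _ => hterm i j)
      ⟨i, Finset.mem_univ _, Finset.sum_pos' (fun j _ => hterm i j) ⟨j, Finset.mem_univ _, ?_⟩⟩
    exact mul_pos h1 (mul_pos (Real.rpow_pos_of_pos h2 _) (Real.rpow_pos_of_pos (hm j) _))
  refine ⟨hT0, ?_⟩
  have hp : 0 < a - 1 := by linarith
  rw [inv_mul_eq_div, le_div_iff₀ hp, e1, e2]
  have key : ∀ i j, (wt hAh hBh i j * (hAh.eigenvalues i * Real.log (hAh.eigenvalues i))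
      - wt hAh hBh i j * (hAh.eigenvalues i * Real.log (hBh.eigenvalues j))) * (a - 1)
      - wt hAh hBh i j * hAh.eigenvalues i * Real.log T ≤
      wt hAh hBh i j * (hAh.eigenvalues i ^ a * hBh.eigenvalues j ^ (1 - a)) / T -
        wt hAh hBh i j * hAh.eigenvalues i := by
    intro i j
    set l := hAh.eigenvalues i
    set u := hBh.eigenvalues j
    have hu : 0 < u := hm j
    rcases (hl i).eq_or_lt with h0 | h0
    · have : l = 0 := h0.symm
      rw [this, Real.zero_rpow (by linarith)]
      simp
    · have hl0 : 0 < l := h0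
      have hx : 0 < l ^ (a - 1) * u ^ (1 - a) / T :=
        div_pos (mul_pos (Real.rpow_pos_of_pos hl0 _) (Real.rpow_pos_of_pos hu _)) hT0
      have := Real.log_le_sub_one_of_pos hx
      rw [Real.log_div (by positivity) hT0.ne', Real.log_mul (by positivity) (by positivity),
        Real.log_rpow hl0, Real.log_rpow hu] at this
      have h3 := mul_le_mul_of_nonneg_left this (mul_nonneg (hw i j) hl0.le)
      have h4 : l ^ a = l * l ^ (a - 1) := by
        rw [← Real.rpow_one_add' hl0.le (by linarith)]; congr 1; ring
      rw [h4]
      calc _ = _ := ?_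
        _ ≤ _ := h3
        _ = _ := ?_
      · ring
      · ring
  have := Finset.sum_le_sum fun i (_ : i ∈ Finset.univ) =>
    Finset.sum_le_sum fun j (_ : j ∈ Finset.univ) => key i j
  simp only [Finset.sum_sub_distrib, ← Finset.sum_mul, ← Finset.sum_div] at this
  rw [← e4] at this
  simp only [Finset.sum_mul] at this e3
  rw [div_self hT0.ne'] at this
  simp only [← Finset.sum_mul] at this e3 ⊢
  rw [← e3] at this
  linarith

lemma schur {X M N : Matrix m m ℂ} (hX : Xᴴ = X) (hM : Mᴴ = M) (hNh : Nᴴ = N)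
    (hMN : N * M = 1) (c : ℝ) (hc : 0 < c) (h : (M - c⁻¹ • (X * X)).PosSemidef) :
    (c • (1 : Matrix m m ℂ) - X * N * X).PosSemidef := by
  have hNM : M * N = 1 := mul_eq_one_comm.mp hMN
  -- (c - T) = (c-T)^2/c + T(c-T)/c,  cT - T^2 = c X N (M - XX/c) N X
  have h1 : (X * N * (M - c⁻¹ • (X * X)) * (X * N)ᴴ).PosSemidef :=
    h.mul_mul_conjTranspose_same _
  have h2 : ((c • (1 : Matrix m m ℂ) - X * N * X) * (c • (1 : Matrix m m ℂ) - X * N * X)ᴴ).PosSemidef :=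
    posSemidef_self_mul_conjTranspose _
  have h3 := h1.add (h2.smul (inv_nonneg.mpr hc.le))
  convert h3 using 1
  simp only [conjTranspose_mul, conjTranspose_sub, conjTranspose_smul, conjTranspose_one, hX, hNh,
    star_trivial]
  have e : X * N * M * (N * X) = X * N * X := by
    rw [mul_assoc X N M, hMN, mul_one, mul_assoc]
  simp only [mul_sub, sub_mul, smul_mul_assoc, mul_smul_comm, mul_one, one_mul, smul_sub, smul_smul,
    e, inv_mul_cancel₀ hc.ne', mul_inv_cancel₀ hc.ne']
  simp only [mul_assoc, one_smul]
  simp only [inv_mul_cancel_left₀ hc.ne', one_smul]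
  abel

lemma upper {A B : Matrix m m ℂ} (hA : IsDensity A) (hB : B.PosDef)
    (hAB' : (B - (1 / 2 : ℝ) • A).PosSemidef) {a : ℝ} (ha : a ∈ Set.Ioc (1:ℝ) 2) :
    renyiRel a A B ≤ Real.log 2 := by
  have hAh := hA.1.isHermitian
  have hBh := hB.isHermitian
  have hl : ∀ i, 0 ≤ hAh.eigenvalues i := hA.1.eigenvalues_nonneg
  have hm : ∀ i, 0 < hBh.eigenvalues i := hB.eigenvalues_pos
  have hAB : (1 / 2 : ℝ) • A ≤ B := hAB'
  have hT0 := (main_ineq hA hB ha.1).1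
  have hp : 0 < a - 1 := by linarith [ha.1]
  have hp1 : a - 1 ≤ 1 := by linarith [ha.2]
  set c : ℝ := 2 ^ (a - 1) with hc
  have hc0 : 0 < c := Real.rpow_pos_of_pos two_pos _
  have hAh' : ((1 / 2 : ℝ) • A).IsHermitian := by
    rw [Matrix.IsHermitian, conjTranspose_smul, hAh.eq]; simp
  have hA' : 0 ≤ (1 / 2 : ℝ) • A := (hA.1.smul (by norm_num : (0:ℝ) ≤ 1 / 2)).nonneg
  set X := mfun (fun u => u ^ ((a - 1) / 2)) A with hX
  set R := mfun (fun u => u ^ (1 / 2 : ℝ)) A with hR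
  set M := mfun (fun u => u ^ (a - 1)) B with hM
  set N := mfun (fun u => u ^ (1 - a)) B with hN
  have hNM : N * M = 1 := by
    rw [hN, hM, mfun_mul hBh, ← mfun_one hBh]
    refine mfun_congr hBh fun i => ?_
    rw [← Real.rpow_add (hm i)]
    simp
  have hXX : X * X = mfun (fun u => u ^ (a - 1)) A := by
    rw [hX, mfun_mul hAh]
    refine mfun_congr hAh fun i => ?_
    rw [← Real.rpow_add' (hl i) (by linarith)]
    congr 1; ring
  have hmono : ((1 / 2 : ℝ) • A) ^ (a - 1) ≤ B ^ (a - 1) :=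
    CFC.rpow_le_rpow ⟨hp.le, hp1⟩ hAB
  have eB : B ^ (a - 1) = M := by
    rw [hM, mfun_eq hBh, CFC.rpow_eq_cfc_real hB.posSemidef.nonneg]
  have eA : ((1 / 2 : ℝ) • A) ^ (a - 1) = c⁻¹ • (X * X) := by
    have hcont : ∀ f : ℝ → ℝ, ∀ s : Set ℝ, s.Finite → ContinuousOn f s :=
      fun f s hs => hs.continuousOn f
    have hfin : (spectrum ℝ A).Finite := finite_real_spectrum
    rw [CFC.rpow_eq_cfc_real hA', hXX, mfun_eq hAh]
    refine (cfc_comp_smul (1 / 2 : ℝ) (fun u : ℝ => u ^ (a - 1)) A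
        (hcont _ _ (hfin.image _)) hAh.isSelfAdjoint).symm.trans ?_
    refine Eq.trans ?_ (cfc_smul (c⁻¹) (fun u : ℝ => u ^ (a - 1)) A (hcont _ _ hfin))
    rw [← mfun_eq hAh, ← mfun_eq hAh]
    refine mfun_congr hAh fun i => ?_
    simp only [smul_eq_mul]
    rw [Real.mul_rpow (by norm_num) (hl i), hc, one_div, Real.inv_rpow (by norm_num)]
  rw [eA, eB] at hmono
  have hS := schur (mfun_herm hAh _) (mfun_herm hBh _) (mfun_herm hBh _) hNM c hc0 hmono
  have hRR : R * R = A := by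
    conv_rhs => rw [← mfun_id hAh]
    rw [hR, mfun_mul hAh]
    refine mfun_congr hAh fun i => ?_
    rw [← Real.rpow_add' (hl i) (by norm_num)]
    norm_num
  have hRX : X * (R * R) * X = mfun (fun u => u ^ a) A := by
    rw [hRR]
    calc X * A * X = X * mfun (fun u => u) A * X := by rw [mfun_id hAh]
      _ = _ := by
        rw [hX, mfun_mul hAh, mfun_mul hAh]
        refine mfun_congr hAh fun i => ?_
        rw [← Real.rpow_add_one' (hl i) (by linarith), ← Real.rpow_add' (hl i) (by linarith)]
        congr 1; ring
  have htr := (hS.mul_mul_conjTranspose_same R).trace_nonneg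
  have e5 : Matrix.trace (R * (c • (1 : Matrix m m ℂ) - X * N * X) * Rᴴ) =
      c - Matrix.trace (mfun (fun u => u ^ a) A * N) := by
    rw [mfun_herm hAh, Matrix.trace_mul_comm, ← Matrix.mul_assoc, hRR,
      Matrix.mul_sub, Matrix.trace_sub, mul_smul_comm, mul_one, Matrix.trace_smul, hA.2, ← hRX, hRR]
    congr 1
    · simp
    · rw [← Matrix.mul_assoc, Matrix.trace_mul_comm]
      simp only [Matrix.mul_assoc]
  rw [e5] at htr
  have hle : (Matrix.trace (mfun (fun u => u ^ a) A * N)).re ≤ c := by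
    have := (Complex.le_def.mp htr).1
    simpa using this
  rw [renyiRel, inv_mul_eq_div, div_le_iff₀ hp, mul_comm, ← Real.log_rpow two_pos]
  exact Real.log_le_log hT0 hle

end RenyiAux

theorem renyi_half_mixture_bounds (n : ℕ) (hn : 1 ≤ n) (a : ℝ)
    (ha : a ∈ Set.Ioc (1:ℝ) 2)
    (ρ₁ ρ₂ : Matrix (Fin n) (Fin n) ℂ) (h1 : IsDensity ρ₁) (h2 : IsDensity ρ₂)
    (hAv : ((1 / 2 : ℝ) • (ρ₁ + ρ₂)).PosDef) :
    Real.log 2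
      ≥ (1 / 2) * (renyiRel a ρ₁ ((1 / 2 : ℝ) • (ρ₁ + ρ₂))
          + renyiRel a ρ₂ ((1 / 2 : ℝ) • (ρ₁ + ρ₂)))
    ∧ (1 / 2) * (renyiRel a ρ₁ ((1 / 2 : ℝ) • (ρ₁ + ρ₂))
          + renyiRel a ρ₂ ((1 / 2 : ℝ) • (ρ₁ + ρ₂)))
      ≥ vnEntropy ((1 / 2 : ℝ) • (ρ₁ + ρ₂))
          - (1 / 2) * vnEntropy ρ₁ - (1 / 2) * vnEntropy ρ₂ := by
  have hg1 : ((1 / 2 : ℝ) • (ρ₁ + ρ₂) - (1 / 2 : ℝ) • ρ₁).PosSemidef := by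
    rw [smul_add, add_sub_cancel_left]
    exact h2.1.smul (by norm_num)
  have hg2 : ((1 / 2 : ℝ) • (ρ₁ + ρ₂) - (1 / 2 : ℝ) • ρ₂).PosSemidef := by
    rw [smul_add, add_sub_cancel_right]
    exact h1.1.smul (by norm_num)
  have u1 := RenyiAux.upper h1 hAv hg1 ha
  have u2 := RenyiAux.upper h2 hAv hg2 ha
  have l1 := (RenyiAux.main_ineq h1 hAv ha.1).2
  have l2 := (RenyiAux.main_ineq h2 hAv ha.1).2
  refine ⟨by linarith, ?_⟩
  have e : vnEntropy ((1 / 2 : ℝ) • (ρ₁ + ρ₂)) =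
      -((1 / 2) * ((Matrix.trace (ρ₁ * matLog ((1 / 2 : ℝ) • (ρ₁ + ρ₂)))).re +
        (Matrix.trace (ρ₂ * matLog ((1 / 2 : ℝ) • (ρ₁ + ρ₂)))).re)) := by
    rw [vnEntropy, smul_mul_assoc, Matrix.trace_smul, Matrix.add_mul, Matrix.trace_add,
      Complex.smul_re, Complex.add_re, smul_eq_mul]
  rw [e, vnEntropy, vnEntropy]
  linarith
end
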